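/- Let (h_n, u_n, f_n) be a contradiction sequence and let χ ∈ C_c^∞(ℝ) with χ(z) = 1 for |z| ≤ 1 and χ(z) = 0 for |z| ≥ 2. Then ‖a·∇(χ(a/h_n)·u_n)‖_{L²} = o(h_n^{1/2}) as n → ∞. -/

import Mathlib

open MeasureTheory Complex ComplexConjugate

noncomputable section

/-- Partial derivative `∂u/∂xᵢ` of a complex-valued function on `ℝ^d`. -/
def pd {d : ℕ} (i : Fin d) (u : EuclideanSpace ℝ (Fin d) → ℂ)
    (x : EuclideanSpace ℝ (Fin d)) : ℂ :=
  fderiv ℝ u x (EuclideanSpace.single i (1 : ℝ))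

/-- Laplacian `Δu = ∑ᵢ ∂²u/∂xᵢ²` of a complex-valued function on `ℝ^d`. -/
def lap {d : ℕ} (u : EuclideanSpace ℝ (Fin d) → ℂ)
    (x : EuclideanSpace ℝ (Fin d)) : ℂ :=
  ∑ i : Fin d, pd i (pd i u) x

/-- The semiclassical Kelvin–Voigt operator
`P_h u = -h²Δu - u - i h (∇a·∇u + a Δu)`. -/
def Ph {d : ℕ} (h : ℝ) (a : EuclideanSpace ℝ (Fin d) → ℝ)
    (u : EuclideanSpace ℝ (Fin d) → ℂ) (x : EuclideanSpace ℝ (Fin d)) : ℂ :=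
  -(h ^ 2 : ℂ) * lap u x - u x -
    Complex.I * (h : ℂ) *
      ((∑ i : Fin d, (fderiv ℝ a x (EuclideanSpace.single i (1 : ℝ)) : ℂ) * pd i u x) +
        (a x : ℂ) * lap u x)

open Filter Asymptotics

section

variable {d : ℕ}

/-- The squared Euclidean length of the complex gradient of `u`. -/
def gradSq (u : EuclideanSpace ℝ (Fin d) → ℂ) (x : EuclideanSpace ℝ (Fin d)) : ℝ :=
  ∑ i : Fin d, ‖pd i u x‖ ^ 2

lemma gradSq_nonneg (u : EuclideanSpace ℝ (Fin d) → ℂ) (x : EuclideanSpace ℝ (Fin d)) :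
    0 ≤ gradSq u x :=
  Finset.sum_nonneg fun _ _ => sq_nonneg _

lemma continuous_pd {u : EuclideanSpace ℝ (Fin d) → ℂ} (hu : ContDiff ℝ 1 u) (i : Fin d) :
    Continuous (pd i u) :=
  (hu.continuous_fderiv one_ne_zero).clm_apply continuous_const

lemma contDiff_pd {u : EuclideanSpace ℝ (Fin d) → ℂ} (hu : ContDiff ℝ (⊤ : ℕ∞) u) (i : Fin d) :
    ContDiff ℝ (⊤ : ℕ∞) (pd i u) :=
  (hu.fderiv_right (m := (⊤ : ℕ∞)) (by simp)).clm_apply contDiff_const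

lemma continuous_gradSq {u : EuclideanSpace ℝ (Fin d) → ℂ} (hu : ContDiff ℝ 1 u) :
    Continuous (gradSq u) :=
  continuous_finsetSum _ fun i _ => (continuous_pd hu i).norm.pow 2

lemma pd_eq_zero {u : EuclideanSpace ℝ (Fin d) → ℂ} {x : EuclideanSpace ℝ (Fin d)}
    (hx : x ∉ tsupport u) (i : Fin d) : pd i u x = 0 :=
  image_eq_zero_of_notMem_tsupport fun h => hx (tsupport_fderiv_apply_subset ℝ _ h)

lemma gradSq_eq_zero {u : EuclideanSpace ℝ (Fin d) → ℂ} {x : EuclideanSpace ℝ (Fin d)}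
    (hx : x ∉ tsupport u) : gradSq u x = 0 := by
  simp [gradSq, pd_eq_zero hx]

lemma lap_eq_zero {u : EuclideanSpace ℝ (Fin d) → ℂ} {x : EuclideanSpace ℝ (Fin d)}
    (hx : x ∉ tsupport u) : lap u x = 0 :=
  Finset.sum_eq_zero fun i _ =>
    pd_eq_zero (fun h => hx (tsupport_fderiv_apply_subset ℝ _ h)) i

lemma Ph_eq_zero {u : EuclideanSpace ℝ (Fin d) → ℂ} {x : EuclideanSpace ℝ (Fin d)}
    (hx : x ∉ tsupport u) (h : ℝ) (a : EuclideanSpace ℝ (Fin d) → ℝ) : Ph h a u x = 0 := by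
  simp [Ph, lap_eq_zero hx, pd_eq_zero hx, image_eq_zero_of_notMem_tsupport hx]

lemma continuous_lap {u : EuclideanSpace ℝ (Fin d) → ℂ} (hu : ContDiff ℝ (⊤ : ℕ∞) u) :
    Continuous (lap u) :=
  continuous_finsetSum _ fun i _ =>
    continuous_pd ((contDiff_pd hu i).of_le (by exact_mod_cast le_top)) i

lemma continuous_Ph {u : EuclideanSpace ℝ (Fin d) → ℂ} (hu : ContDiff ℝ (⊤ : ℕ∞) u)
    {a : EuclideanSpace ℝ (Fin d) → ℝ} (ha : ContDiff ℝ 1 a) (h : ℝ) :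
    Continuous (Ph h a u) := by
  have hl := continuous_lap hu
  have hp := continuous_pd (hu.of_le (by exact_mod_cast le_top) : ContDiff ℝ 1 u)
  have hd : ∀ i : Fin d, Continuous fun x => fderiv ℝ a x (EuclideanSpace.single i (1 : ℝ)) :=
    fun i => (ha.continuous_fderiv one_ne_zero).clm_apply continuous_const
  have hs : Continuous fun x => ∑ i : Fin d,
      (fderiv ℝ a x (EuclideanSpace.single i (1 : ℝ)) : ℂ) * pd i u x :=
    continuous_finsetSum _ fun i _ => (continuous_ofReal.comp (hd i)).mul (hp i)
  have hac := continuous_ofReal.comp ha.continuous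
  exact ((continuous_const.mul hl).sub hu.continuous).sub
    (continuous_const.mul (hs.add (hac.mul hl)))

lemma integrable_of_eq_zero_off_tsupport {F : Type*} [NormedAddCommGroup F]
    {u : EuclideanSpace ℝ (Fin d) → ℂ} (hu : HasCompactSupport u)
    {g : EuclideanSpace ℝ (Fin d) → F} (hg : Continuous g) (h0 : ∀ x ∉ tsupport u, g x = 0) :
    Integrable g :=
  hg.integrable_of_hasCompactSupport (HasCompactSupport.intro hu fun x hx => h0 x hx)

lemma integral_norm_mul_norm_le_sqrt {f g : EuclideanSpace ℝ (Fin d) → ℂ}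
    (hf : Continuous f) (hfs : HasCompactSupport f) (hg : Continuous g)
    (hgs : HasCompactSupport g) :
    ∫ x, ‖f x‖ * ‖g x‖ ≤ √(∫ x, ‖f x‖ ^ 2) * √(∫ x, ‖g x‖ ^ 2) := by
  have key := integral_mul_norm_le_Lp_mul_Lq (μ := volume) Real.HolderConjugate.two_two
    (hf.memLp_of_hasCompactSupport hfs) (hg.memLp_of_hasCompactSupport hgs)
  simpa [Real.sqrt_eq_rpow] using key

lemma sum_sq_fderiv (a : EuclideanSpace ℝ (Fin d) → ℝ) (x : EuclideanSpace ℝ (Fin d)) :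
    ∑ i : Fin d, fderiv ℝ a x (EuclideanSpace.single i (1 : ℝ)) ^ 2 = ‖gradient a x‖ ^ 2 := by
  rw [EuclideanSpace.real_norm_sq_eq]
  refine Finset.sum_congr rfl fun i _ => ?_
  rw [← inner_gradient_left, EuclideanSpace.inner_single_right]
  simp

lemma sum_sq_fderiv_le {a : EuclideanSpace ℝ (Fin d) → ℝ} {K : ℝ}
    {x : EuclideanSpace ℝ (Fin d)} (hax : 0 ≤ a x)
    (hK : ‖gradient a x‖ ≤ K * √(a x)) :
    ∑ i : Fin d, fderiv ℝ a x (EuclideanSpace.single i (1 : ℝ)) ^ 2 ≤ K ^ 2 * a x := by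
  rw [sum_sq_fderiv]
  calc ‖gradient a x‖ ^ 2 ≤ (K * √(a x)) ^ 2 := by gcongr
    _ = K ^ 2 * a x := by rw [mul_pow, Real.sq_sqrt hax]

lemma pd_mul {f g : EuclideanSpace ℝ (Fin d) → ℂ} {x : EuclideanSpace ℝ (Fin d)}
    (hf : DifferentiableAt ℝ f x) (hg : DifferentiableAt ℝ g x) (i : Fin d) :
    pd i (fun y => f y * g y) x = f x * pd i g x + pd i f x * g x := by
  simp only [pd]
  rw [fderiv_fun_mul hf hg]
  simp [mul_comm]

lemma pd_ofReal {a : EuclideanSpace ℝ (Fin d) → ℝ} {x : EuclideanSpace ℝ (Fin d)}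
    (ha : DifferentiableAt ℝ a x) (i : Fin d) :
    pd i (fun y => (a y : ℂ)) x = fderiv ℝ a x (EuclideanSpace.single i (1 : ℝ)) := by
  have h : HasFDerivAt (fun y => (a y : ℂ)) (ofRealCLM.comp (fderiv ℝ a x)) x :=
    ofRealCLM.hasFDerivAt.comp x ha.hasFDerivAt
  simp [pd, h.fderiv]

lemma pd_conj {u : EuclideanSpace ℝ (Fin d) → ℂ} {x : EuclideanSpace ℝ (Fin d)}
    (hu : DifferentiableAt ℝ u x) (i : Fin d) :
    pd i (fun y => conj (u y)) x = conj (pd i u x) := by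
  have h : HasFDerivAt (fun y => conj (u y)) ((conjCLE : ℂ →L[ℝ] ℂ).comp (fderiv ℝ u x)) x :=
    (conjCLE : ℂ →L[ℝ] ℂ).hasFDerivAt.comp x hu.hasFDerivAt
  simp [pd, h.fderiv]

lemma integral_pd_mul {g φ : EuclideanSpace ℝ (Fin d) → ℂ} (hg : ContDiff ℝ 1 g)
    (hφ : ContDiff ℝ 1 φ) (hgs : HasCompactSupport g) (i : Fin d) :
    ∫ x, pd i g x * φ x = -∫ x, g x * pd i φ x := by
  have hz : ∀ x ∉ tsupport g, g x = 0 := fun x hx => image_eq_zero_of_notMem_tsupport hx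
  rw [eq_neg_iff_add_eq_zero, add_comm, ← eq_neg_iff_add_eq_zero]
  refine integral_mul_fderiv_eq_neg_fderiv_mul_of_integrable
    (integrable_of_eq_zero_off_tsupport hgs ((continuous_pd hg i).mul hφ.continuous) ?_)
    (integrable_of_eq_zero_off_tsupport hgs (hg.continuous.mul (continuous_pd hφ i)) ?_)
    (integrable_of_eq_zero_off_tsupport hgs (hg.continuous.mul hφ.continuous) ?_)
    (fun x _ => (hg.differentiable one_ne_zero).differentiableAt)
    (fun x _ => (hφ.differentiable one_ne_zero).differentiableAt)
  · intro x hx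
    exact mul_eq_zero_of_left (pd_eq_zero hx i) _
  · intro x hx
    exact mul_eq_zero_of_left (hz x hx) _
  · intro x hx
    exact mul_eq_zero_of_left (hz x hx) _

/-- The complex coefficient `h² + i h a` for which `P_h u = -div((h² + i h a)∇u) - u`. -/
def dampCoeff (h : ℝ) (a : EuclideanSpace ℝ (Fin d) → ℝ) (x : EuclideanSpace ℝ (Fin d)) : ℂ :=
  (h : ℂ) ^ 2 + I * h * (a x : ℂ)

lemma contDiff_dampCoeff (h : ℝ) {a : EuclideanSpace ℝ (Fin d) → ℝ} (ha : ContDiff ℝ 1 a) :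
    ContDiff ℝ 1 (dampCoeff h a) :=
  contDiff_const.add (contDiff_const.mul (ofRealCLM.contDiff.comp ha))

lemma Ph_eq_neg_div {u : EuclideanSpace ℝ (Fin d) → ℂ} (hu : ContDiff ℝ (⊤ : ℕ∞) u)
    {a : EuclideanSpace ℝ (Fin d) → ℝ} (ha : ContDiff ℝ 1 a) (h : ℝ)
    (x : EuclideanSpace ℝ (Fin d)) :
    Ph h a u x = -(∑ i : Fin d, pd i (fun y => dampCoeff h a y * pd i u y) x) - u x := by
  have hc : ∀ i : Fin d, pd i (dampCoeff h a) x =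
      I * h * (fderiv ℝ a x (EuclideanSpace.single i (1 : ℝ)) : ℂ) := by
    intro i
    have hax := (ha.differentiable one_ne_zero).differentiableAt (x := x)
    have had : DifferentiableAt ℝ (fun y => (a y : ℂ)) x :=
      ofRealCLM.differentiableAt.comp x hax
    rw [← pd_ofReal hax i]
    have h1 : HasFDerivAt (dampCoeff h a) ((I * h) • fderiv ℝ (fun y => (a y : ℂ)) x) x :=
      (had.hasFDerivAt.const_mul _).const_add _
    simp [pd, h1.fderiv]
  have hterm : ∀ i : Fin d, pd i (fun y => dampCoeff h a y * pd i u y) x =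
      dampCoeff h a x * pd i (pd i u) x +
        I * h * ((fderiv ℝ a x (EuclideanSpace.single i (1 : ℝ)) : ℂ) * pd i u x) := by
    intro i
    rw [pd_mul ((contDiff_dampCoeff h ha).differentiable one_ne_zero).differentiableAt
      ((contDiff_pd hu i).differentiable (by simp)).differentiableAt, hc, mul_assoc (I * (h : ℂ))]
  simp only [hterm, Finset.sum_add_distrib, ← Finset.mul_sum, Ph]
  rw [show ∑ i : Fin d, pd i (pd i u) x = lap u x from rfl, dampCoeff]
  ring

lemma integral_Ph_mul {u φ : EuclideanSpace ℝ (Fin d) → ℂ} (hu : ContDiff ℝ (⊤ : ℕ∞) u)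
    (hus : HasCompactSupport u) (hφ : ContDiff ℝ 1 φ)
    {a : EuclideanSpace ℝ (Fin d) → ℝ} (ha : ContDiff ℝ 1 a) (h : ℝ) :
    ∫ x, Ph h a u x * φ x =
      (∫ x, dampCoeff h a x * ∑ i : Fin d, pd i u x * pd i φ x) - ∫ x, u x * φ x := by
  have hz : ∀ x ∉ tsupport u, u x = 0 := fun x hx => image_eq_zero_of_notMem_tsupport hx
  have hu1 : ContDiff ℝ 1 u := hu.of_le (by exact_mod_cast le_top)
  have hg : ∀ i : Fin d, ContDiff ℝ 1 (fun y => dampCoeff h a y * pd i u y) := fun i =>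
    (contDiff_dampCoeff h ha).mul ((contDiff_pd hu i).of_le (by exact_mod_cast le_top))
  have hgs : ∀ i : Fin d, HasCompactSupport (fun y => dampCoeff h a y * pd i u y) := fun i =>
    HasCompactSupport.intro hus fun x hx => by rw [pd_eq_zero hx, mul_zero]
  have hi1 : ∀ i : Fin d,
      Integrable fun x => pd i (fun y => dampCoeff h a y * pd i u y) x * φ x := fun i =>
    integrable_of_eq_zero_off_tsupport (hgs i) ((continuous_pd (hg i) i).mul hφ.continuous)
      fun x hx => by rw [pd_eq_zero hx, zero_mul]
  have hi2 : ∀ i : Fin d,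
      Integrable fun x => dampCoeff h a x * pd i u x * pd i φ x := fun i =>
    integrable_of_eq_zero_off_tsupport hus ((hg i).continuous.mul (continuous_pd hφ i))
      fun x hx => by rw [pd_eq_zero hx, mul_zero, zero_mul]
  have hi3 : Integrable fun x => u x * φ x :=
    integrable_of_eq_zero_off_tsupport hus (hu.continuous.mul hφ.continuous)
      fun x hx => by rw [hz x hx, zero_mul]
  have e1 : ∀ x, Ph h a u x * φ x =
      -(∑ i : Fin d, pd i (fun y => dampCoeff h a y * pd i u y) x * φ x) - u x * φ x := by
    intro x
    rw [Ph_eq_neg_div hu ha, sub_mul, neg_mul, Finset.sum_mul]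
  have e2 : ∀ x, dampCoeff h a x * ∑ i : Fin d, pd i u x * pd i φ x =
      ∑ i : Fin d, dampCoeff h a x * pd i u x * pd i φ x := by
    intro x
    simp only [Finset.mul_sum, mul_assoc]
  simp only [e1, e2]
  rw [integral_sub (integrable_finsetSum _ fun i _ => hi1 i).fun_neg hi3, integral_neg,
    integral_finsetSum _ fun i _ => hi1 i, integral_finsetSum _ fun i _ => hi2 i,
    ← Finset.sum_neg_distrib]
  congr 1
  refine Finset.sum_congr rfl fun i _ => ?_
  rw [integral_pd_mul (hg i) hφ (hgs i), neg_neg]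

lemma norm_integral_Ph_mul_conj_le {u : EuclideanSpace ℝ (Fin d) → ℂ}
    (hu : ContDiff ℝ (⊤ : ℕ∞) u) (hus : HasCompactSupport u) (hnorm : ∫ x, ‖u x‖ ^ 2 = 1)
    {a : EuclideanSpace ℝ (Fin d) → ℝ} (ha : ContDiff ℝ 1 a) (h : ℝ)
    {b : EuclideanSpace ℝ (Fin d) → ℂ} {C : ℝ} (hb : ∀ x, ‖b x‖ ≤ C) :
    ‖∫ x, Ph h a u x * (b x * conj (u x))‖ ≤ C * √(∫ x, ‖Ph h a u x‖ ^ 2) := by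
  have hC : 0 ≤ C := (norm_nonneg _).trans (hb 0)
  have hPc := continuous_Ph hu ha h
  have hPs : HasCompactSupport (Ph h a u) := HasCompactSupport.intro hus fun x hx =>
    Ph_eq_zero hx h a
  have hcs := integral_norm_mul_norm_le_sqrt hPc hPs hu.continuous hus
  rw [hnorm, Real.sqrt_one, mul_one] at hcs
  calc ‖∫ x, Ph h a u x * (b x * conj (u x))‖
      ≤ ∫ x, C * (‖Ph h a u x‖ * ‖u x‖) := by
        refine norm_integral_le_of_norm_le ?_ (.of_forall fun x => ?_)
        · exact (integrable_of_eq_zero_off_tsupport hus (hPc.norm.mul hu.continuous.norm)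
            fun x hx => by simp [Ph_eq_zero hx]).const_mul C
        · rw [norm_mul, norm_mul, RCLike.norm_conj]
          calc ‖Ph h a u x‖ * (‖b x‖ * ‖u x‖) ≤ ‖Ph h a u x‖ * (C * ‖u x‖) := by
                gcongr; exact hb x
            _ = C * (‖Ph h a u x‖ * ‖u x‖) := by ring
    _ ≤ C * √(∫ x, ‖Ph h a u x‖ ^ 2) := by
        rw [integral_const_mul]; gcongr

lemma mul_integral_damping_gradSq_le {u : EuclideanSpace ℝ (Fin d) → ℂ}
    (hu : ContDiff ℝ (⊤ : ℕ∞) u) (hus : HasCompactSupport u) (hnorm : ∫ x, ‖u x‖ ^ 2 = 1)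
    {a : EuclideanSpace ℝ (Fin d) → ℝ} (ha : ContDiff ℝ 1 a) (h : ℝ) :
    h * ∫ x, a x * gradSq u x ≤ √(∫ x, ‖Ph h a u x‖ ^ 2) := by
  have hu1 : ContDiff ℝ 1 u := hu.of_le (by exact_mod_cast le_top)
  have hbd := norm_integral_Ph_mul_conj_le hu hus hnorm ha h (b := fun _ => 1) (C := 1) (by simp)
  simp only [one_mul] at hbd
  refine le_trans ?_ hbd
  have hcong : ∀ x, dampCoeff h a x * ∑ i : Fin d, pd i u x * pd i (fun y => conj (u y)) x =
      dampCoeff h a x * (gradSq u x : ℂ) := by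
    intro x
    congr 1
    simp only [gradSq, ofReal_sum, ofReal_pow]
    refine Finset.sum_congr rfl fun i _ => ?_
    rw [pd_conj (hu1.differentiable one_ne_zero).differentiableAt, mul_conj']
  have hI : Integrable fun x => dampCoeff h a x * (gradSq u x : ℂ) :=
    integrable_of_eq_zero_off_tsupport hus
      ((contDiff_dampCoeff h ha).continuous.mul (continuous_ofReal.comp (continuous_gradSq hu1)))
      fun x hx => by rw [gradSq_eq_zero hx, ofReal_zero, mul_zero]
  have hreal : ∫ x, u x * conj (u x) = ((∫ x, ‖u x‖ ^ 2 : ℝ) : ℂ) := by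
    rw [← integral_complex_ofReal]
    exact integral_congr_ae (.of_forall fun x => by simp [mul_conj'])
  have him : (∫ x, Ph h a u x * conj (u x)).im = h * ∫ x, a x * gradSq u x := by
    have huc : ContDiff ℝ 1 fun x => conj (u x) := conjCLE.contDiff.comp hu1
    rw [integral_Ph_mul hu hus huc ha h]
    simp only [hcong]
    rw [hreal, sub_im, ofReal_im, sub_zero, ← integral_const_mul]
    refine (integral_im hI).symm.trans (integral_congr_ae (.of_forall fun x => ?_))
    simp [dampCoeff, ← ofReal_pow, mul_assoc]
  rw [← him]
  exact (le_abs_self _).trans (abs_im_le_norm _)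

lemma integral_damping_mul_normSq_le {u : EuclideanSpace ℝ (Fin d) → ℂ}
    (hu : ContDiff ℝ (⊤ : ℕ∞) u) (hus : HasCompactSupport u) (hnorm : ∫ x, ‖u x‖ ^ 2 = 1)
    {a : EuclideanSpace ℝ (Fin d) → ℝ} (ha : ContDiff ℝ 1 a) {C K h : ℝ} (hh : 0 ≤ h)
    (haC : ∀ x, a x ≤ C) (hapos : ∀ x, 0 ≤ a x) (haK : ∀ x, ‖gradient a x‖ ≤ K * √(a x)) :
    ∫ x, a x * ‖u x‖ ^ 2 ≤ C * √(∫ x, ‖Ph h a u x‖ ^ 2) +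
      (h ^ 2 + h * C) * ((∫ x, a x * gradSq u x) + |K| * √(∫ x, a x * gradSq u x)) := by
  have hC : 0 ≤ C := (hapos 0).trans (haC 0)
  have hz : ∀ x ∉ tsupport u, u x = 0 := fun x hx => image_eq_zero_of_notMem_tsupport hx
  have hu1 : ContDiff ℝ 1 u := hu.of_le (by exact_mod_cast le_top)
  have hac : ContDiff ℝ 1 fun x => (a x : ℂ) := ofRealCLM.contDiff.comp ha
  have huc : ContDiff ℝ 1 fun x => conj (u x) := conjCLE.contDiff.comp hu1
  have hG := continuous_gradSq hu1
  have hbd := norm_integral_Ph_mul_conj_le hu hus hnorm ha h (b := fun x => (a x : ℂ)) (C := C)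
    (fun x => by simpa [abs_of_nonneg (hapos x)] using haC x)
  have hweak := integral_Ph_mul hu hus (hac.mul huc) ha h
  have hreal : ∫ x, u x * ((a x : ℂ) * conj (u x)) = ((∫ x, a x * ‖u x‖ ^ 2 : ℝ) : ℂ) := by
    rw [← integral_complex_ofReal]
    refine integral_congr_ae (.of_forall fun x => ?_)
    push_cast
    rw [mul_left_comm, mul_conj']
  rw [hreal] at hweak
  have hcoeff : ∀ x, ‖dampCoeff h a x‖ ≤ h ^ 2 + h * C := by
    intro x
    refine (norm_add_le _ _).trans ?_
    simp only [norm_pow, norm_mul, norm_I, norm_real, Real.norm_eq_abs, abs_of_nonneg hh,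
      abs_of_nonneg (hapos x), one_mul]
    gcongr
    exact haC x
  have hsum : ∀ x, ‖∑ i : Fin d, pd i u x * pd i (fun y => (a y : ℂ) * conj (u y)) x‖ ≤
      a x * gradSq u x + |K| * (√(a x * gradSq u x) * ‖u x‖) := by
    intro x
    have hax := (ha.differentiable one_ne_zero).differentiableAt (x := x)
    have hterm : ∀ i : Fin d, ‖pd i u x * pd i (fun y => (a y : ℂ) * conj (u y)) x‖ ≤
        a x * ‖pd i u x‖ ^ 2 +
          (‖pd i u x‖ * |fderiv ℝ a x (EuclideanSpace.single i (1 : ℝ))|) * ‖u x‖ := by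
      intro i
      rw [pd_mul (hac.differentiable one_ne_zero).differentiableAt
        (huc.differentiable one_ne_zero).differentiableAt, pd_ofReal hax,
        pd_conj (hu1.differentiable one_ne_zero).differentiableAt, mul_add]
      refine (norm_add_le _ _).trans (le_of_eq ?_)
      simp only [norm_mul, norm_real, Real.norm_eq_abs, abs_of_nonneg (hapos x), RCLike.norm_conj]
      ring
    have hcs : ∑ i : Fin d, ‖pd i u x‖ * |fderiv ℝ a x (EuclideanSpace.single i (1 : ℝ))| ≤
        |K| * √(a x * gradSq u x) := by
      refine (Real.sum_mul_le_sqrt_mul_sqrt _ _ _).trans ?_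
      simp only [sq_abs]
      calc √(gradSq u x) * √(∑ i, fderiv ℝ a x (EuclideanSpace.single i (1 : ℝ)) ^ 2)
          ≤ √(gradSq u x) * √(K ^ 2 * a x) := by
            gcongr; exact sum_sq_fderiv_le (hapos x) (haK x)
        _ = |K| * √(a x * gradSq u x) := by
            rw [Real.sqrt_mul (sq_nonneg K), Real.sqrt_sq_eq_abs, Real.sqrt_mul (hapos x)]
            ring
    calc _ ≤ _ := (norm_sum_le _ _).trans (Finset.sum_le_sum fun i _ => hterm i)
      _ = a x * gradSq u x + (∑ i : Fin d, ‖pd i u x‖ *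
            |fderiv ℝ a x (EuclideanSpace.single i (1 : ℝ))|) * ‖u x‖ := by
          rw [Finset.sum_add_distrib, ← Finset.mul_sum, ← Finset.sum_mul, gradSq]
      _ ≤ _ := by
          rw [← mul_assoc]; gcongr
  have hsq : Continuous fun x => √(a x * gradSq u x) := (ha.continuous.mul hG).sqrt
  have hcs : ∫ x, √(a x * gradSq u x) * ‖u x‖ ≤ √(∫ x, a x * gradSq u x) := by
    have key := integral_norm_mul_norm_le_sqrt (f := fun x => (√(a x * gradSq u x) : ℂ))
      (continuous_ofReal.comp hsq)
      (HasCompactSupport.intro hus fun x hx => by simp [gradSq_eq_zero hx]) hu.continuous hus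
    have hn : ∀ x, ‖(√(a x * gradSq u x) : ℂ)‖ = √(a x * gradSq u x) := fun x => by
      rw [norm_real, Real.norm_of_nonneg (Real.sqrt_nonneg _)]
    simpa only [hn, hnorm, Real.sqrt_one, mul_one,
      Real.sq_sqrt (mul_nonneg (hapos _) (gradSq_nonneg u _))] using key
  have hi1 : Integrable fun x => a x * gradSq u x :=
    integrable_of_eq_zero_off_tsupport hus (ha.continuous.mul hG)
      fun x hx => by rw [gradSq_eq_zero hx, mul_zero]
  have hi2 : Integrable fun x => √(a x * gradSq u x) * ‖u x‖ :=
    integrable_of_eq_zero_off_tsupport hus (hsq.mul hu.continuous.norm)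
      fun x hx => by rw [hz x hx, norm_zero, mul_zero]
  have hmain : ‖∫ x, dampCoeff h a x *
        ∑ i : Fin d, pd i u x * pd i (fun y => (a y : ℂ) * conj (u y)) x‖ ≤
      (h ^ 2 + h * C) * ((∫ x, a x * gradSq u x) + |K| * √(∫ x, a x * gradSq u x)) := by
    calc _ ≤ ∫ x, (h ^ 2 + h * C) *
          (a x * gradSq u x + |K| * (√(a x * gradSq u x) * ‖u x‖)) := by
          refine norm_integral_le_of_norm_le ((hi1.add (hi2.const_mul _)).const_mul _)
            (.of_forall fun x => ?_)
          rw [norm_mul]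
          exact mul_le_mul (hcoeff x) (hsum x) (norm_nonneg _) (by positivity)
      _ ≤ _ := by
          rw [integral_const_mul, integral_add hi1 (hi2.const_mul _), integral_const_mul]
          gcongr
  calc ∫ x, a x * ‖u x‖ ^ 2 ≤ ‖((∫ x, a x * ‖u x‖ ^ 2 : ℝ) : ℂ)‖ := by
        rw [norm_real]; exact Real.le_norm_self _
    _ ≤ _ := by
        rw [eq_sub_iff_add_eq, ← eq_sub_iff_add_eq'] at hweak
        rw [hweak, add_comm]
        exact (norm_sub_le _ _).trans (add_le_add hmain hbd)

lemma exists_abs_self_mul_le {g : ℝ → ℝ} (hg : Continuous g) (hgs : HasCompactSupport g) :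
    ∃ M, ∀ z, |z * g z| ≤ M := by
  have hc : Continuous fun z : ℝ => z * g z := continuous_id.mul hg
  have hs : HasCompactSupport fun z : ℝ => z * g z := hgs.mul_left
  exact hc.bounded_above_of_compact_support hs

lemma sum_normSq_damping_mul_pd_cutoff_le {u : EuclideanSpace ℝ (Fin d) → ℂ}
    {a : EuclideanSpace ℝ (Fin d) → ℝ} {x : EuclideanSpace ℝ (Fin d)}
    (hu : DifferentiableAt ℝ u x) (ha : DifferentiableAt ℝ a x) {χ : ℝ → ℝ}
    (hχ : Differentiable ℝ χ) {K M₀ M₁ h : ℝ} (hh : 0 < h) (hax : 0 ≤ a x)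
    (haK : ‖gradient a x‖ ≤ K * √(a x))
    (hM₀ : ∀ z, |z * χ z ^ 2| ≤ M₀) (hM₁ : ∀ z, |z * deriv χ z| ≤ M₁) :
    ∑ i : Fin d, ‖(a x : ℂ) * pd i (fun y => ((χ (a y / h) : ℝ) : ℂ) * u y) x‖ ^ 2 ≤
      2 * h * M₀ * (a x * gradSq u x) + 2 * M₁ ^ 2 * K ^ 2 * (a x * ‖u x‖ ^ 2) := by
  set z := a x / h with hzdef
  have haz : a x = h * z := by rw [hzdef]; field_simp
  have hcomp : HasFDerivAt (fun y => χ (a y / h)) ((deriv χ z * h⁻¹) • fderiv ℝ a x) x := by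
    have h1 : HasFDerivAt (fun y => a y / h) (h⁻¹ • fderiv ℝ a x) x := by
      simpa only [div_eq_inv_mul] using ha.hasFDerivAt.const_mul h⁻¹
    rw [mul_smul]
    exact (hχ z).hasDerivAt.comp_hasFDerivAt x h1
  have hterm : ∀ i : Fin d,
      ‖(a x : ℂ) * pd i (fun y => ((χ (a y / h) : ℝ) : ℂ) * u y) x‖ ^ 2 ≤
      2 * h * M₀ * (a x * ‖pd i u x‖ ^ 2) +
        2 * M₁ ^ 2 * ‖u x‖ ^ 2 * fderiv ℝ a x (EuclideanSpace.single i (1 : ℝ)) ^ 2 := by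
    intro i
    have hcd : DifferentiableAt ℝ (fun y => ((χ (a y / h) : ℝ) : ℂ)) x :=
      ofRealCLM.differentiableAt.comp x hcomp.differentiableAt
    rw [pd_mul hcd hu,
      pd_ofReal hcomp.differentiableAt, hcomp.fderiv]
    simp only [smul_apply, smul_eq_mul]
    set D := fderiv ℝ a x (EuclideanSpace.single i (1 : ℝ))
    have hrew : (a x : ℂ) * (((χ (a x / h) : ℝ) : ℂ) * pd i u x +
        ((deriv χ z * h⁻¹ * D : ℝ) : ℂ) * u x) =
        ((a x * χ z : ℝ) : ℂ) * pd i u x + ((z * deriv χ z * D : ℝ) : ℂ) * u x := by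
      rw [← hzdef, haz]
      push_cast
      have : (h : ℂ) ≠ 0 := by exact_mod_cast hh.ne'
      field_simp
    rw [hrew]
    have h1 : (a x * χ z) ^ 2 ≤ h * M₀ * a x := by
      have : (a x * χ z) ^ 2 = h * (z * χ z ^ 2) * a x := by rw [haz]; ring
      rw [this]
      gcongr
      exact (le_abs_self _).trans (hM₀ z)
    have h2 : (z * deriv χ z) ^ 2 ≤ M₁ ^ 2 := by
      rw [← sq_abs]; gcongr; exact hM₁ z
    calc _ ≤ (‖((a x * χ z : ℝ) : ℂ) * pd i u x‖ + ‖((z * deriv χ z * D : ℝ) : ℂ) * u x‖) ^ 2 := by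
          gcongr; exact norm_add_le _ _
      _ ≤ 2 * (‖((a x * χ z : ℝ) : ℂ) * pd i u x‖ ^ 2 +
            ‖((z * deriv χ z * D : ℝ) : ℂ) * u x‖ ^ 2) := add_sq_le
      _ = 2 * ((a x * χ z) ^ 2 * ‖pd i u x‖ ^ 2 +
            (z * deriv χ z) ^ 2 * (‖u x‖ ^ 2 * D ^ 2)) := by
          simp only [norm_mul, norm_real, Real.norm_eq_abs, mul_pow, sq_abs]; ring
      _ ≤ 2 * (h * M₀ * a x * ‖pd i u x‖ ^ 2 + M₁ ^ 2 * (‖u x‖ ^ 2 * D ^ 2)) := by gcongr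
      _ = _ := by ring
  calc _ ≤ _ := Finset.sum_le_sum fun i _ => hterm i
    _ = 2 * h * M₀ * (a x * gradSq u x) + 2 * M₁ ^ 2 * ‖u x‖ ^ 2 *
          ∑ i : Fin d, fderiv ℝ a x (EuclideanSpace.single i (1 : ℝ)) ^ 2 := by
        rw [Finset.sum_add_distrib, ← Finset.mul_sum, ← Finset.mul_sum, ← Finset.mul_sum, gradSq]
    _ ≤ 2 * h * M₀ * (a x * gradSq u x) + 2 * M₁ ^ 2 * ‖u x‖ ^ 2 * (K ^ 2 * a x) := by
        gcongr; exact sum_sq_fderiv_le hax haK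
    _ = _ := by ring

lemma integral_sum_normSq_damping_mul_pd_cutoff_le {u : EuclideanSpace ℝ (Fin d) → ℂ}
    (hu : ContDiff ℝ 1 u) (hus : HasCompactSupport u)
    {a : EuclideanSpace ℝ (Fin d) → ℝ} (ha : ContDiff ℝ 1 a) {χ : ℝ → ℝ}
    (hχ : Differentiable ℝ χ) {K M₀ M₁ h : ℝ} (hh : 0 < h) (hapos : ∀ x, 0 ≤ a x)
    (haK : ∀ x, ‖gradient a x‖ ≤ K * √(a x))
    (hM₀ : ∀ z, |z * χ z ^ 2| ≤ M₀) (hM₁ : ∀ z, |z * deriv χ z| ≤ M₁) :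
    ∫ x, ∑ i : Fin d, ‖(a x : ℂ) * pd i (fun y => ((χ (a y / h) : ℝ) : ℂ) * u y) x‖ ^ 2 ≤
      2 * h * M₀ * (∫ x, a x * gradSq u x) + 2 * M₁ ^ 2 * K ^ 2 * ∫ x, a x * ‖u x‖ ^ 2 := by
  have hi1 : Integrable fun x => a x * gradSq u x :=
    integrable_of_eq_zero_off_tsupport hus (ha.continuous.mul (continuous_gradSq hu))
      fun x hx => by rw [gradSq_eq_zero hx, mul_zero]
  have hi2 : Integrable fun x => a x * ‖u x‖ ^ 2 :=
    integrable_of_eq_zero_off_tsupport hus (ha.continuous.mul (hu.continuous.norm.pow 2))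
      fun x hx => by simp [image_eq_zero_of_notMem_tsupport hx]
  rw [← integral_const_mul, ← integral_const_mul,
    ← integral_add (hi1.const_mul _) (hi2.const_mul _)]
  refine integral_mono_of_nonneg (.of_forall fun x => Finset.sum_nonneg fun i _ => sq_nonneg _)
    ((hi1.const_mul _).add (hi2.const_mul _)) (.of_forall fun x => ?_)
  exact sum_normSq_damping_mul_pd_cutoff_le (hu.differentiable one_ne_zero).differentiableAt
    (ha.differentiable one_ne_zero).differentiableAt hχ hh (hapos x) (haK x) hM₀ hM₁

end

/-- **The estimate `a∇(χ(a/h)u) = o_{L²}(h^{1/2})` of Section 4.2.1 of the paper**: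
for a contradiction sequence and a cutoff `χ` as above,
`‖a ∇(χ(a/h_n) u_n)‖_{L²} = o(h_n^{1/2})`. -/
theorem stmt_9 (d : ℕ) (hd : 1 ≤ d)
    (a : EuclideanSpace ℝ (Fin d) → ℝ) (K : ℝ)
    (haC1 : ContDiff ℝ 1 a) (habd : ∃ C, ∀ x, a x ≤ C) (hapos : ∀ x, 0 ≤ a x)
    (haK : ∀ x, ‖gradient a x‖ ≤ K * Real.sqrt (a x))
    (h : ℕ → ℝ) (u : ℕ → EuclideanSpace ℝ (Fin d) → ℂ)
    (hhpos : ∀ n, 0 < h n) (hh0 : Tendsto h atTop (nhds 0))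
    (husm : ∀ n, ContDiff ℝ (⊤ : ℕ∞) (u n)) (husupp : ∀ n, HasCompactSupport (u n))
    (hunorm : ∀ n, (∫ x, ‖u n x‖ ^ 2) = 1)
    (hf : (fun n => Real.sqrt (∫ x, ‖Ph (h n) a (u n) x‖ ^ 2)) =o[atTop] h)
    (χ : ℝ → ℝ) (hχ : ContDiff ℝ (⊤ : ℕ∞) χ) (hχsupp : HasCompactSupport χ)
    (hχ1 : ∀ z : ℝ, |z| ≤ 1 → χ z = 1) (hχ0 : ∀ z : ℝ, 2 ≤ |z| → χ z = 0) :
    (fun n => Real.sqrt (∫ x, ∑ i : Fin d,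
        ‖(a x : ℂ) * pd i (fun y => ((χ (a y / h n) : ℝ) : ℂ) * u n y) x‖ ^ 2))
    =o[atTop] (fun n => Real.sqrt (h n)) := by
  obtain ⟨C, hC⟩ := habd
  have hχd : Continuous (deriv χ) := hχ.continuous_deriv (by simp)
  have hχ2 : HasCompactSupport fun z => χ z ^ 2 := by
    simp only [sq]
    exact hχsupp.mul_left
  obtain ⟨M₀, hM₀⟩ := exists_abs_self_mul_le (hχ.continuous.pow 2) hχ2
  obtain ⟨M₁, hM₁⟩ := exists_abs_self_mul_le hχd hχsupp.deriv
  set e : ℕ → ℝ := fun n => √(∫ x, ‖Ph (h n) a (u n) x‖ ^ 2) with he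
  set A : ℕ → ℝ := fun n => ∫ x, a x * gradSq (u n) x with hA
  set B : ℕ → ℝ := fun n => ∫ x, a x * ‖u n x‖ ^ 2 with hB
  have heh : Tendsto (fun n => e n / h n) atTop (nhds 0) := hf.tendsto_div_nhds_zero
  have hA0 : ∀ n, 0 ≤ A n := fun n =>
    integral_nonneg fun x => mul_nonneg (hapos x) (gradSq_nonneg _ x)
  have hAlim : Tendsto A atTop (nhds 0) :=
    squeeze_zero hA0 (fun n => (le_div_iff₀' (hhpos n)).mpr
      (mul_integral_damping_gradSq_le (husm n) (husupp n) (hunorm n) haC1 (h n))) heh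
  have hBlim : Tendsto (fun n => B n / h n) atTop (nhds 0) := by
    have hlim : Tendsto (fun n => C * (e n / h n) + (h n + C) * (A n + |K| * √(A n)))
        atTop (nhds 0) := by
      have := (heh.const_mul C).add ((hh0.add_const C).mul
        (hAlim.add (hAlim.sqrt.const_mul |K|)))
      simpa using this
    refine squeeze_zero (fun n => div_nonneg (integral_nonneg fun x =>
      mul_nonneg (hapos x) (sq_nonneg _)) (hhpos n).le) (fun n => ?_) hlim
    rw [div_le_iff₀ (hhpos n)]
    refine (integral_damping_mul_normSq_le (husm n) (husupp n) (hunorm n) haC1 (hhpos n).le hC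
      hapos haK).trans (le_of_eq ?_)
    have := (hhpos n).ne'
    simp only [he, hA]
    field_simp
  refine isLittleO_of_tendsto (fun n hn => absurd hn (Real.sqrt_pos.mpr (hhpos n)).ne') ?_
  simp only [← Real.sqrt_div' _ (hhpos _).le]
  rw [← Real.sqrt_zero]
  refine Tendsto.sqrt ?_
  have hlim : Tendsto (fun n => 2 * M₀ * A n + 2 * M₁ ^ 2 * K ^ 2 * (B n / h n))
      atTop (nhds 0) := by
    simpa using (hAlim.const_mul (2 * M₀)).add (hBlim.const_mul (2 * M₁ ^ 2 * K ^ 2))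
  refine squeeze_zero (fun n => div_nonneg (integral_nonneg fun x =>
    Finset.sum_nonneg fun i _ => sq_nonneg _) (hhpos n).le) (fun n => ?_) hlim
  rw [div_le_iff₀ (hhpos n)]
  refine (integral_sum_normSq_damping_mul_pd_cutoff_le
    ((husm n).of_le (by exact_mod_cast le_top)) (husupp n) haC1
    (hχ.differentiable (by simp)) (hhpos n) hapos haK hM₀ hM₁).trans (le_of_eq ?_)
  have := (hhpos n).ne'
  simp only [hA, hB]
  field_simp

end
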